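/- Let (q_υ)_{υ∈ℝ^I} be a nice distribution of polynomials on ℝ^n, let R̄ ≥ √3, and set R₀ = R̄^{1/4}/13. Let g be the polynomial g(x) = E_υ[q_υ(x)²]. Then HyperVar_{R₀}[g] ≤ 8·( E_υ[‖q_υ‖₂²] + E_υ[HyperVar_{R̄}[q_υ]] )·E_υ[HyperVar_{R̄}[q_υ]]. -/

import Mathlib

open MeasureTheory ProbabilityTheory MvPolynomial

/-- The standard Gaussian measure `N(0,1)^n` on `ℝ^n`. -/
noncomputable def gaussianN (n : ℕ) : Measure (Fin n → ℝ) :=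
  Measure.pi fun _ => gaussianReal 0 1

/-- The normalized probabilists' Hermite polynomial `h_k = H_k / √(k!)`. -/
noncomputable def hermiteFn (k : ℕ) (t : ℝ) : ℝ :=
  ((Polynomial.hermite k).map (Int.castRingHom ℝ)).eval t / Real.sqrt (Nat.factorial k)

/-- The multivariate Hermite polynomial `h_α(x) = ∏ i, h_{α i}(x i)`. -/
noncomputable def hermiteMv {n : ℕ} (α : Fin n → ℕ) (x : Fin n → ℝ) : ℝ :=
  ∏ i, hermiteFn (α i) (x i)

/-- Hermite coefficient `f̂(α) = E_{x ∼ N(0,1)^n}[f(x)·h_α(x)]` of a function. -/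
noncomputable def hermiteCoeffF {n : ℕ} (f : (Fin n → ℝ) → ℝ) (α : Fin n → ℕ) : ℝ :=
  ∫ x, f x * hermiteMv α x ∂(gaussianN n)

/-- Hermite coefficient `ĝ(α)` of a polynomial. -/
noncomputable def hermiteCoeff {n : ℕ} (g : MvPolynomial (Fin n) ℝ) (α : Fin n → ℕ) : ℝ :=
  hermiteCoeffF (fun x => eval x g) α

/-- The squared Gaussian 2-norm `‖g‖₂² = E_{x ∼ N(0,1)^n}[g(x)²]`. -/
noncomputable def norm2sq {n : ℕ} (g : MvPolynomial (Fin n) ℝ) : ℝ :=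
  ∫ x, (eval x g) ^ 2 ∂(gaussianN n)

/-- The `λ`-zoom of `g` at `x`: `g_{λ|x}(y) = g(√(1-λ)·x + √λ·y)`, as a polynomial in `y`. -/
noncomputable def zoom {n : ℕ} (g : MvPolynomial (Fin n) ℝ) (lam : ℝ) (x : Fin n → ℝ) :
    MvPolynomial (Fin n) ℝ :=
  aeval (fun i => C (Real.sqrt (1 - lam) * x i) + C (Real.sqrt lam) * X i) g

/-- `HyperVar_R[g^{≥m}] = Σ_{|α| ≥ m} R^{2|α|}·ĝ(α)²`. -/
noncomputable def hyperVarGE {n : ℕ} (R : ℝ) (m : ℕ) (g : MvPolynomial (Fin n) ℝ) : ℝ :=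
  ∑' α : Fin n → ℕ, if m ≤ ∑ i, α i then R ^ (2 * ∑ i, α i) * hermiteCoeff g α ^ 2 else 0

/-- `HyperVar_R[g] = Σ_{α ≠ 0} R^{2|α|}·ĝ(α)²`. -/
noncomputable def hyperVar {n : ℕ} (R : ℝ) (g : MvPolynomial (Fin n) ℝ) : ℝ :=
  hyperVarGE R 1 g

/-- A nice distribution of polynomials of degree at most `d` on `ℝ^n`, indexed by
`υ ∈ ℝ^I`: each `g υ` has degree at most `d` and each coefficient of `g υ` is a
polynomial of degree at most `d` in `υ`. -/
def NiceFamily (n I d : ℕ) (g : (Fin I → ℝ) → MvPolynomial (Fin n) ℝ) : Prop :=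
  (∀ υ, (g υ).totalDegree ≤ d) ∧
  ∀ m : Fin n →₀ ℕ, ∃ P : MvPolynomial (Fin I) ℝ,
    P.totalDegree ≤ d ∧ ∀ υ, coeff m (g υ) = eval υ P

/-- `HyperVar_R[f] = Σ_{α ≠ 0} R^{2|α|}·f̂(α)²` for a function on Gaussian space. -/
noncomputable def hyperVarF {n : ℕ} (R : ℝ) (f : (Fin n → ℝ) → ℝ) : ℝ :=
  ∑' α : Fin n → ℕ,
    if 1 ≤ ∑ i, α i then R ^ (2 * ∑ i, α i) * hermiteCoeffF f α ^ 2 else 0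

/-!
Let `D_u = (u!)^{-1/2} ∂^u`. Since `D_u h_α = √(α choose u) h_{α - u}`, the Hermite coefficient
`p̂(γ)` is the Gaussian mean of `D_γ p`, and summing over `u` gives
`∑ u, t^|u| ‖D_u p‖² = ∑ α, (t + 1)^|α| p̂(α)²`.
By the Leibniz rule `D_γ (p q) = ∑_{u + v = γ} √(γ choose u) D_u p * D_v q`, so two applications of
Cauchy-Schwarz bound the squared coefficient of `p q` at `γ` by
`2^|γ| ∑_{u + v = γ} ‖D_u p‖² ‖D_v q‖²`. Weighting by `r^{2|γ|}` turns the sum over `γ ≠ 0` into a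
Cauchy product without its constant term; with `p = q` and `2 r² + 1 ≤ R²` this reads
`HyperVar_r[p²] ≤ (‖p‖² + V)² - ‖p‖⁴ = (2 ‖p‖² + V) V`, where `V = HyperVar_R[p]`.

Finally `√HyperVar_r` is a seminorm, so by Minkowski's inequality its value at the averaged square
is at most the average of `√((2 ‖q_υ‖² + V_υ) V_υ)`, and a last Cauchy-Schwarz over `υ` separates
the two factors.
-/

section Gaussian

theorem integrable_eval_gaussianReal (μ : ℝ) (v : NNReal) (p : Polynomial ℝ) :
    Integrable (fun x => p.eval x) (gaussianReal μ v) := by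
  induction p using Polynomial.induction_on' with
  | add p q hp hq =>
    simp only [Polynomial.eval_add]
    exact hp.add hq
  | monomial k a =>
    simp only [Polynomial.eval_monomial]
    refine Integrable.const_mul ?_ a
    simpa using (memLp_id_gaussianReal (μ := μ) (v := v) k).integrable_norm_pow'.mono'
      (f := fun x => x ^ k) (by fun_prop) (Filter.Eventually.of_forall fun x => by simp)

theorem hasDerivAt_gaussianPDFReal (μ : ℝ) (v : NNReal) (x : ℝ) :
    HasDerivAt (gaussianPDFReal μ v) (gaussianPDFReal μ v x * (-(x - μ) / v)) x := by
  have hexp : HasDerivAt (fun y : ℝ => -(y - μ) ^ 2 / (2 * v)) (-(x - μ) / v) x := by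
    refine (((((hasDerivAt_id x).sub_const μ).pow 2).neg).div_const (2 * (v : ℝ))).congr_deriv ?_
    simp only [id, Nat.cast_ofNat, Nat.reduceSub, pow_one, mul_one, ← mul_neg]
    exact mul_div_mul_left _ _ two_ne_zero
  refine (hexp.exp.const_mul _).congr_deriv ?_
  simp only [gaussianPDFReal, mul_assoc]

theorem integral_sub_mul_eval_gaussianReal (μ : ℝ) (v : NNReal) (p : Polynomial ℝ) :
    ∫ x, (x - μ) * p.eval x ∂(gaussianReal μ v) =
      v * ∫ x, p.derivative.eval x ∂(gaussianReal μ v) := by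
  obtain rfl | hv := eq_or_ne v 0
  · simp [gaussianReal_zero_var]
  have hint (p : Polynomial ℝ) : Integrable (fun x => gaussianPDFReal μ v x * p.eval x) := by
    have h := integrable_eval_gaussianReal μ v p
    rw [gaussianReal_of_var_ne_zero μ hv,
      integrable_withDensity_iff_integrable_smul' (measurable_gaussianPDF μ v)
        (Filter.Eventually.of_forall fun x => gaussianPDF_lt_top)] at h
    simpa using h
  have hparts := integral_mul_deriv_eq_deriv_mul_of_integrable
    (fun x _ => hasDerivAt_gaussianPDFReal μ v x) (fun x _ => p.hasDerivAt x)
    (hint p.derivative) (((hint ((Polynomial.C μ - Polynomial.X) * p)).div_const v).congr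
      (Filter.Eventually.of_forall fun x => by
        simp only [Pi.mul_apply, Polynomial.eval_mul, Polynomial.eval_sub,
          Polynomial.eval_C, Polynomial.eval_X]
        ring)) (hint p)
  simp only [integral_gaussianReal_eq_integral_smul hv, smul_eq_mul, hparts, mul_neg,
    ← integral_neg, ← integral_const_mul]
  congr with x
  field_simp [NNReal.coe_ne_zero.2 hv]

end Gaussian

section Hermite

theorem derivative_hermite_succ (k : ℕ) :
    (Polynomial.hermite (k + 1)).derivative = (k + 1 : ℕ) • Polynomial.hermite k := by
  induction k with
  | zero => simp
  | succ k ih =>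
    rw [Polynomial.hermite_succ (k + 1), Polynomial.derivative_sub, Polynomial.derivative_mul, ih,
      Polynomial.derivative_X, Polynomial.derivative_smul, Polynomial.hermite_succ k]
    simp only [nsmul_eq_mul]
    push_cast
    ring

/-- The normalised Hermite polynomials `h_k = H_k / √(k!)` as elements of `ℝ[X]`. -/
noncomputable def hermiteSeq : Polynomial.Sequence ℝ where
  elems' k := (√k.factorial)⁻¹ • (Polynomial.hermite k).map (Int.castRingHom ℝ)
  degree_eq' k := by
    have h : (√k.factorial)⁻¹ ≠ 0 := by positivity
    change Polynomial.degree (_ • _) = _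
    rw [Polynomial.degree_smul_of_smul_regular _ (IsSMulRegular.of_ne_zero h),
      (Polynomial.hermite_monic k).degree_map, Polynomial.degree_hermite]

theorem hermiteSeq_apply (k : ℕ) :
    hermiteSeq k = (√k.factorial)⁻¹ • (Polynomial.hermite k).map (Int.castRingHom ℝ) := rfl

theorem eval_hermiteSeq (k : ℕ) (x : ℝ) : (hermiteSeq k).eval x = hermiteFn k x := by
  rw [hermiteSeq_apply, Polynomial.eval_smul, smul_eq_mul, hermiteFn, div_eq_inv_mul]

theorem hermiteSeq_zero : hermiteSeq 0 = 1 := by simp [hermiteSeq_apply]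

theorem sqrt_smul_hermiteSeq_succ (k : ℕ) :
    √(k + 1) • hermiteSeq (k + 1) =
      Polynomial.X * hermiteSeq k - (hermiteSeq k).derivative := by
  have h : √(k + 1) ≠ 0 := by positivity
  simp only [hermiteSeq_apply, Polynomial.hermite_succ, Polynomial.map_sub, Polynomial.map_mul,
    Polynomial.map_X, Polynomial.derivative_smul, Polynomial.derivative_map, mul_smul_comm,
    ← smul_sub, smul_smul, Nat.factorial_succ, Nat.cast_mul, Nat.cast_succ]
  rw [Real.sqrt_mul (by positivity), mul_inv, mul_inv_cancel_left₀ h]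

theorem derivative_hermiteSeq (k : ℕ) :
    (hermiteSeq k).derivative = √k • hermiteSeq (k - 1) := by
  cases k with
  | zero => simp [hermiteSeq_zero]
  | succ k =>
    rw [hermiteSeq_apply, Polynomial.derivative_smul, Polynomial.derivative_map,
      derivative_hermite_succ, ← Polynomial.coe_mapRingHom, map_nsmul, Polynomial.coe_mapRingHom,
      ← Nat.cast_smul_eq_nsmul ℝ, smul_smul, Nat.add_sub_cancel, hermiteSeq_apply, smul_smul,
      Nat.factorial_succ, Nat.cast_mul, Real.sqrt_mul (Nat.cast_nonneg _), mul_inv, mul_right_comm,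
      inv_mul_eq_div, Real.div_sqrt]

theorem iterate_derivative_hermiteSeq (j k : ℕ) :
    Polynomial.derivative^[j] (hermiteSeq k) = √(k.descFactorial j) • hermiteSeq (k - j) := by
  induction j with
  | zero => simp
  | succ j ih =>
    rw [Function.iterate_succ_apply', ih, Polynomial.derivative_smul, derivative_hermiteSeq,
      smul_smul, Nat.descFactorial_succ, mul_comm (k - j), Nat.cast_mul,
      Real.sqrt_mul (Nat.cast_nonneg _), Nat.sub_sub]

theorem sqrt_factorial_smul_hasseDeriv_hermiteSeq (j k : ℕ) :
    √j.factorial • Polynomial.hasseDeriv j (hermiteSeq k) = √(k.choose j) • hermiteSeq (k - j) := by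
  have h : √j.factorial ≠ 0 := by positivity
  apply smul_right_injective _ h
  dsimp only
  rw [smul_smul, Real.mul_self_sqrt (Nat.cast_nonneg _), Nat.cast_smul_eq_nsmul,
    ← Pi.smul_apply, ← LinearMap.coe_smul, Polynomial.factorial_smul_hasseDeriv,
    iterate_derivative_hermiteSeq, smul_smul, Nat.descFactorial_eq_factorial_mul_choose,
    Nat.cast_mul, Real.sqrt_mul (Nat.cast_nonneg _)]

theorem sqrt_factorial_mul_integral_eval_mul_hermiteSeq (p : Polynomial ℝ) (k : ℕ) :
    √k.factorial * ∫ x, (p * hermiteSeq k).eval x ∂(gaussianReal 0 1) =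
      ∫ x, (Polynomial.derivative^[k] p).eval x ∂(gaussianReal 0 1) := by
  induction k generalizing p with
  | zero => simp [hermiteSeq_zero]
  | succ k ih =>
    have hparts := integral_sub_mul_eval_gaussianReal 0 1 (p * hermiteSeq k)
    have hsplit : ∀ x, (x - 0) * (p * hermiteSeq k).eval x =
        √(k + 1) * (p * hermiteSeq (k + 1)).eval x + (p * (hermiteSeq k).derivative).eval x := by
      intro x
      have hrec := congrArg (Polynomial.eval x) (sqrt_smul_hermiteSeq_succ k)
      simp only [Polynomial.eval_smul, smul_eq_mul, Polynomial.eval_mul, Polynomial.eval_sub,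
        Polynomial.eval_X] at hrec ⊢
      linear_combination -p.eval x * hrec
    have hi := integrable_eval_gaussianReal 0 1
    simp only [hsplit, Polynomial.derivative_mul, Polynomial.eval_add, NNReal.coe_one, one_mul]
      at hparts
    rw [integral_add ((hi _).const_mul _) (hi _), integral_add (hi _) (hi _), add_left_inj,
      integral_const_mul] at hparts
    rw [Function.iterate_succ_apply, ← ih, ← hparts, Nat.factorial_succ, mul_comm (k + 1),
      Nat.cast_mul, Real.sqrt_mul (Nat.cast_nonneg _), mul_assoc, Nat.cast_succ]

theorem integral_hermiteFn_mul_hermiteFn (j k : ℕ) :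
    ∫ x, hermiteFn j x * hermiteFn k x ∂(gaussianReal 0 1) = if j = k then 1 else 0 := by
  have hmean (m : ℕ) : ∫ x, hermiteFn m x ∂(gaussianReal 0 1) = if m = 0 then 1 else 0 := by
    simp only [← eval_hermiteSeq]
    cases m with
    | zero => simp [hermiteSeq_zero]
    | succ m =>
      simpa [Function.iterate_succ_apply, Nat.factorial_ne_zero]
        using sqrt_factorial_mul_integral_eval_mul_hermiteSeq 1 (m + 1)
  have h := sqrt_factorial_mul_integral_eval_mul_hermiteSeq (hermiteSeq j) k
  simp only [iterate_derivative_hermiteSeq, Polynomial.eval_smul, smul_eq_mul,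
    integral_const_mul, Polynomial.eval_mul, eval_hermiteSeq, hmean] at h
  have hk : √k.factorial ≠ 0 := by positivity
  refine mul_left_cancel₀ hk (h.trans ?_)
  rcases lt_trichotomy j k with hjk | rfl | hjk
  · simp [Nat.descFactorial_of_lt hjk, hjk.ne]
  · simp [Nat.descFactorial_self]
  · simp [(Nat.sub_pos_of_lt hjk).ne', hjk.ne']

end Hermite

section MultiIndex

open Finset

variable {σ : Type*} [Fintype σ]

/-- The factorial `α! = ∏ i, (α i)!` of a multi-index. -/
def multiFactorial (α : σ →₀ ℕ) : ℕ :=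
  ∏ i, (α i).factorial

/-- The binomial coefficient `∏ i, (α i choose u i)` of two multi-indices. -/
def multiChoose (α u : σ →₀ ℕ) : ℕ :=
  ∏ i, (α i).choose (u i)

theorem multiChoose_mul_multiFactorial (u v : σ →₀ ℕ) :
    multiChoose (u + v) u * (multiFactorial u * multiFactorial v) = multiFactorial (u + v) := by
  simp only [multiChoose, multiFactorial, ← prod_mul_distrib, ← mul_assoc, Finsupp.add_apply]
  exact prod_congr rfl fun i _ => Nat.choose_symm_add (a := u i) ▸
    Nat.add_choose_mul_factorial_mul_factorial (u i) (v i)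

theorem multiChoose_self (α : σ →₀ ℕ) : multiChoose α α = 1 := by simp [multiChoose]

theorem multiChoose_zero_right (α : σ →₀ ℕ) : multiChoose α 0 = 1 := by simp [multiChoose]

theorem multiChoose_eq_zero_of_not_le {α u : σ →₀ ℕ} (h : ¬u ≤ α) : multiChoose α u = 0 := by
  obtain ⟨i, hi⟩ : ∃ i, α i < u i := by simpa [Finsupp.le_def] using h
  exact prod_eq_zero (mem_univ i) (Nat.choose_eq_zero_of_lt hi)

theorem sum_Iic_multiChoose_mul_pow [DecidableEq σ] {R : Type*} [CommSemiring R] (t : R)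
    (α : σ →₀ ℕ) :
    ∑ u ∈ Iic α, (multiChoose α u : R) * t ^ u.degree = (t + 1) ^ α.degree := by
  have hIic : (Iic α).map Finsupp.equivFunOnFinite.toEmbedding =
      Fintype.piFinset fun i => range (α i + 1) := by
    ext u
    simp [Finsupp.le_def]
  rw [Finsupp.degree_eq_sum, ← prod_pow_eq_pow_sum]
  simp only [add_pow, one_pow, mul_one, prod_univ_sum, ← hIic, sum_map, multiChoose,
    Nat.cast_prod, Finsupp.degree_eq_sum, ← prod_pow_eq_pow_sum, ← prod_mul_distrib]
  simp [mul_comm]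

theorem hasSum_multiChoose_mul_pow (t : ℝ) (α : σ →₀ ℕ) :
    HasSum (fun u => (multiChoose α u : ℝ) * t ^ u.degree) ((t + 1) ^ α.degree) := by
  classical
  rw [← sum_Iic_multiChoose_mul_pow]
  refine hasSum_sum_of_ne_finset_zero fun u hu => ?_
  rw [multiChoose_eq_zero_of_not_le (mt mem_Iic.2 hu), Nat.cast_zero, zero_mul]

theorem sum_antidiagonal_multiChoose [DecidableEq σ] (γ : σ →₀ ℕ) :
    ∑ p ∈ antidiagonal γ, multiChoose γ p.1 = 2 ^ γ.degree := by
  have h := sum_Iic_multiChoose_mul_pow (1 : ℕ) γ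
  simp only [one_pow, mul_one, Nat.cast_id, Nat.reduceAdd] at h
  rw [← h]
  refine sum_bij' (fun p _ => p.1) (fun u _ => (u, γ - u)) ?_ ?_ ?_ ?_ ?_
  · rintro ⟨u, v⟩ huv
    exact mem_Iic.2 (mem_antidiagonal.1 huv ▸ le_self_add)
  · exact fun u hu => mem_antidiagonal.2 (add_tsub_cancel_of_le (mem_Iic.1 hu))
  · rintro ⟨u, v⟩ huv
    rw [← mem_antidiagonal.1 huv, add_tsub_cancel_left]
  · exact fun u _ => rfl
  · exact fun uv _ => rfl

end MultiIndex

section Taylor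

open Finset

variable {σ : Type*}

theorem coeff_prod_toMvPolynomial [Fintype σ] {R : Type*} [CommSemiring R] (f : σ → Polynomial R)
    (u : σ →₀ ℕ) : coeff u (∏ i, (f i).toMvPolynomial i) = ∏ i, (f i).coeff (u i) := by
  classical
  have hexp (i : σ) : (f i).toMvPolynomial i =
      ∑ k ∈ range (max (f i).natDegree (u i) + 1),
        monomial (Finsupp.single i k) ((f i).coeff k) := by
    conv_lhs => rw [(f i).as_sum_range_C_mul_X_pow' (n := max (f i).natDegree (u i) + 1) (by simp)]
    simp [Polynomial.toMvPolynomial, C_mul_X_pow_eq_monomial]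
  have hmonomial (k : σ → ℕ) : ∏ i, monomial (Finsupp.single i (k i)) ((f i).coeff (k i)) =
      monomial (Finsupp.equivFunOnFinite.symm k) (∏ i, (f i).coeff (k i)) := by
    rw [← Finsupp.univ_sum_single (Finsupp.equivFunOnFinite.symm k), monomial_sum_prod]
    rfl
  simp only [hexp, prod_univ_sum, coeff_sum, hmonomial, coeff_monomial, Equiv.symm_apply_eq,
    sum_ite_eq']
  simp

/-- The Taylor expansion `p(x + y)` of a polynomial `p(x)`, as a polynomial in `y` whose
coefficients are polynomials in `x`. -/
noncomputable def mvTaylor (σ R : Type*) [CommSemiring R] :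
    MvPolynomial σ R →ₐ[R] MvPolynomial σ (MvPolynomial σ R) :=
  aeval fun i => X i + C (X i)

theorem mvTaylor_toMvPolynomial {R : Type*} [CommSemiring R] (i : σ) (f : Polynomial R) :
    mvTaylor σ R (f.toMvPolynomial i) =
      (Polynomial.taylor (X i : MvPolynomial σ R) (f.map C)).toMvPolynomial i := by
  induction f using Polynomial.induction_on' with
  | add p q hp hq => simp only [map_add, Polynomial.map_add, hp, hq]
  | monomial k a =>
    simp [← Polynomial.C_mul_X_pow_eq_monomial, mvTaylor, Polynomial.toMvPolynomial]

variable [Fintype σ]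

/-- The normalised derivative `D_u p = (u!)^{-1/2} ∂^u p`, read off the Taylor expansion
`p(x + y) = ∑ u, (∂^u p)(x) / u! * y^u`. -/
noncomputable def normDeriv (u : σ →₀ ℕ) : MvPolynomial σ ℝ →ₗ[ℝ] MvPolynomial σ ℝ :=
  √(multiFactorial u) •
    ((lcoeff (MvPolynomial σ ℝ) u).restrictScalars ℝ ∘ₗ (mvTaylor σ ℝ).toLinearMap)

theorem normDeriv_apply (u : σ →₀ ℕ) (p : MvPolynomial σ ℝ) :
    normDeriv u p = √(multiFactorial u) • coeff u (mvTaylor σ ℝ p) := rfl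

theorem normDeriv_mul [DecidableEq σ] (γ : σ →₀ ℕ) (p q : MvPolynomial σ ℝ) :
    normDeriv γ (p * q) = ∑ uv ∈ antidiagonal γ,
      √(multiChoose γ uv.1) • (normDeriv uv.1 p * normDeriv uv.2 q) := by
  simp only [normDeriv_apply, map_mul, coeff_mul, smul_sum, smul_mul_smul_comm, smul_smul]
  refine sum_congr rfl fun uv huv => ?_
  rw [← mem_antidiagonal.1 huv, ← multiChoose_mul_multiFactorial, Nat.cast_mul, Nat.cast_mul,
    Real.sqrt_mul (Nat.cast_nonneg _), Real.sqrt_mul (Nat.cast_nonneg _)]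

end Taylor

section HermiteBasis

open Finset

variable {σ : Type*} [Fintype σ]

theorem hasseDeriv_map {R S : Type*} [Semiring R] [Semiring S] (f : R →+* S) (k : ℕ)
    (p : Polynomial R) :
    Polynomial.hasseDeriv k (p.map f) = (Polynomial.hasseDeriv k p).map f := by
  ext
  simp [Polynomial.hasseDeriv_coeff]

theorem normDeriv_prod_toMvPolynomial (u : σ →₀ ℕ) (f : σ → Polynomial ℝ) :
    normDeriv u (∏ i, (f i).toMvPolynomial i) =
      ∏ i, (√(u i).factorial • Polynomial.hasseDeriv (u i) (f i)).toMvPolynomial i := by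
  have hcoeff (i : σ) :
      (Polynomial.taylor (X i : MvPolynomial σ ℝ) ((f i).map C)).coeff (u i) =
        (Polynomial.hasseDeriv (u i) (f i)).toMvPolynomial i := by
    rw [Polynomial.taylor_coeff, hasseDeriv_map, Polynomial.eval_map]
    rfl
  simp only [normDeriv_apply, map_prod, mvTaylor_toMvPolynomial, coeff_prod_toMvPolynomial, hcoeff,
    map_smul, multiFactorial, prod_smul, Nat.cast_prod,
    Real.sqrt_prod _ fun _ _ => Nat.cast_nonneg _]

theorem monomial_eq_smul_prod_toMvPolynomial {R : Type*} [CommSemiring R] (m : σ →₀ ℕ)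
    (a : R) : monomial m a = a • ∏ i, (Polynomial.X ^ m i : Polynomial R).toMvPolynomial i := by
  simp [Polynomial.toMvPolynomial, smul_eq_C_mul, monomial_eq, Finsupp.prod_fintype]

theorem normDeriv_eq_zero_of_totalDegree_lt {u : σ →₀ ℕ} {p : MvPolynomial σ ℝ}
    (h : p.totalDegree < u.degree) : normDeriv u p = 0 := by
  rw [p.as_sum, map_sum]
  refine sum_eq_zero fun m hm => ?_
  obtain ⟨i, hi⟩ : ∃ i, m i < u i := by
    by_contra! hle
    exact (h.trans_le (Finsupp.degree_mono hle)).not_ge (le_totalDegree hm)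
  rw [monomial_eq_smul_prod_toMvPolynomial, map_smul, normDeriv_prod_toMvPolynomial,
    prod_eq_zero (mem_univ i), smul_zero]
  rw [Polynomial.hasseDeriv_eq_zero_of_lt_natDegree _ _ (by simpa using hi), smul_zero, map_zero]

/-- The multivariate Hermite polynomials `h_α = ∏ i, h_{α i}(X i)`. -/
noncomputable def hermitePoly (α : σ →₀ ℕ) : MvPolynomial σ ℝ :=
  ∏ i, (hermiteSeq (α i)).toMvPolynomial i

theorem hermitePoly_zero : hermitePoly (0 : σ →₀ ℕ) = 1 := by
  simp [hermitePoly, hermiteSeq_zero]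

theorem eval_hermitePoly {n : ℕ} (α : Fin n →₀ ℕ) (x : Fin n → ℝ) :
    eval x (hermitePoly α) = hermiteMv α x := by
  simp only [hermitePoly, map_prod, eval_toMvPolynomial, eval_hermiteSeq, hermiteMv]

theorem normDeriv_hermitePoly (u α : σ →₀ ℕ) :
    normDeriv u (hermitePoly α) = √(multiChoose α u) • hermitePoly (α - u) := by
  simp only [hermitePoly, normDeriv_prod_toMvPolynomial, sqrt_factorial_smul_hasseDeriv_hermiteSeq,
    map_smul, prod_smul, multiChoose, Nat.cast_prod, Finsupp.tsub_apply,
    Real.sqrt_prod _ fun _ _ => Nat.cast_nonneg _]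

theorem span_range_hermitePoly :
    Submodule.span ℝ (Set.range (hermitePoly (σ := σ))) = ⊤ := by
  classical
  have hprod (f : σ → Polynomial ℝ) :
      ∏ i, (f i).toMvPolynomial i ∈ Submodule.span ℝ (Set.range (hermitePoly (σ := σ))) := by
    have hspan : Submodule.span ℝ (Set.range hermiteSeq) = ⊤ :=
      hermiteSeq.span fun k => (Polynomial.leadingCoeff_ne_zero.2 (hermiteSeq.ne_zero k)).isUnit
    choose c hc using fun i => (Finsupp.mem_span_range_iff_exists_finsupp (R := ℝ)).1
      (hspan ▸ Submodule.mem_top : f i ∈ Submodule.span ℝ (Set.range hermiteSeq))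
    simp only [← hc, Finsupp.sum, map_sum, map_smul, prod_univ_sum, prod_smul]
    exact Submodule.sum_mem _ fun k _ => Submodule.smul_mem _ _
      (Submodule.subset_span ⟨Finsupp.equivFunOnFinite.symm k, rfl⟩)
  refine eq_top_iff.2 fun p _ => ?_
  rw [p.as_sum]
  refine Submodule.sum_mem _ fun m _ => ?_
  rw [monomial_eq_smul_prod_toMvPolynomial]
  exact Submodule.smul_mem _ _ (hprod _)

theorem normDeriv_zero (p : MvPolynomial σ ℝ) : normDeriv 0 p = p := by
  suffices h : normDeriv 0 = LinearMap.id from LinearMap.congr_fun h p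
  refine LinearMap.ext_on_range span_range_hermitePoly fun α => ?_
  simp [normDeriv_hermitePoly, multiChoose_zero_right]

end HermiteBasis

section GaussianMean

open Finset

variable {n : ℕ}

theorem integrable_eval_gaussianN (p : MvPolynomial (Fin n) ℝ) :
    Integrable (fun x => eval x p) (gaussianN n) := by
  simp only [eval_eq']
  refine integrable_finsetSum _ fun m _ => Integrable.const_mul ?_ _
  refine Integrable.fintype_prod (f := fun i t => t ^ m i) fun i => ?_
  simpa using integrable_eval_gaussianReal 0 1 (Polynomial.X ^ m i)

theorem memLp_two_eval_gaussianN (p : MvPolynomial (Fin n) ℝ) :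
    MemLp (fun x => eval x p) 2 (gaussianN n) := by
  rw [memLp_two_iff_integrable_sq (integrable_eval_gaussianN p).aestronglyMeasurable]
  simp only [← map_pow]
  exact integrable_eval_gaussianN (p ^ 2)

/-- The expectation `E[p]` of a polynomial under the standard Gaussian measure, as a linear
functional. -/
noncomputable def gaussianMean : MvPolynomial (Fin n) ℝ →ₗ[ℝ] ℝ where
  toFun p := ∫ x, eval x p ∂(gaussianN n)
  map_add' p q := by
    simp only [map_add]
    exact integral_add (integrable_eval_gaussianN p) (integrable_eval_gaussianN q)
  map_smul' c p := by simp only [smul_eval, integral_const_mul, RingHom.id_apply, smul_eq_mul]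

theorem gaussianMean_apply (p : MvPolynomial (Fin n) ℝ) :
    gaussianMean p = ∫ x, eval x p ∂(gaussianN n) := rfl

theorem norm2sq_eq_gaussianMean (p : MvPolynomial (Fin n) ℝ) :
    norm2sq p = gaussianMean (p * p) := by
  simp only [norm2sq, gaussianMean_apply, map_mul, sq]

theorem norm2sq_nonneg (p : MvPolynomial (Fin n) ℝ) : 0 ≤ norm2sq p :=
  integral_nonneg fun _ => sq_nonneg _

theorem hermiteCoeff_eq_gaussianMean (p : MvPolynomial (Fin n) ℝ) (α : Fin n →₀ ℕ) :
    hermiteCoeff p α = gaussianMean (p * hermitePoly α) := by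
  simp only [hermiteCoeff, hermiteCoeffF, gaussianMean_apply, map_mul, eval_hermitePoly]

theorem gaussianMean_hermitePoly_mul (α β : Fin n →₀ ℕ) :
    gaussianMean (hermitePoly α * hermitePoly β) = if α = β then 1 else 0 := by
  simp only [gaussianMean_apply, map_mul, eval_hermitePoly, hermiteMv, ← prod_mul_distrib]
  rw [gaussianN, integral_fintype_prod_eq_prod (fun i t => hermiteFn (α i) t * hermiteFn (β i) t)]
  simp only [integral_hermiteFn_mul_hermiteFn, prod_ite_zero, prod_const_one, mem_univ,
    forall_const, DFunLike.ext_iff]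

theorem gaussianMean_hermitePoly (α : Fin n →₀ ℕ) :
    gaussianMean (hermitePoly α) = if α = 0 then 1 else 0 := by
  rw [← gaussianMean_hermitePoly_mul, hermitePoly_zero, mul_one]

theorem hermiteCoeff_eq_gaussianMean_normDeriv (p : MvPolynomial (Fin n) ℝ) (γ : Fin n →₀ ℕ) :
    hermiteCoeff p γ = gaussianMean (normDeriv γ p) := by
  rw [hermiteCoeff_eq_gaussianMean]
  suffices h : gaussianMean ∘ₗ LinearMap.mulRight ℝ (hermitePoly γ) =
      gaussianMean ∘ₗ normDeriv γ from LinearMap.congr_fun h p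
  refine LinearMap.ext_on_range span_range_hermitePoly fun α => ?_
  simp only [LinearMap.comp_apply, LinearMap.mulRight_apply, gaussianMean_hermitePoly_mul,
    normDeriv_hermitePoly, map_smul, gaussianMean_hermitePoly, smul_eq_mul, tsub_eq_zero_iff_le]
  by_cases hγα : γ ≤ α
  · obtain rfl | hne := eq_or_ne α γ
    · simp [multiChoose_self]
    · rw [if_neg hne, if_neg fun hαγ => hne (le_antisymm hαγ hγα), mul_zero]
  · rw [if_neg fun h => hγα h.ge, multiChoose_eq_zero_of_not_le hγα, Nat.cast_zero, Real.sqrt_zero,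
      zero_mul]

theorem hermiteCoeff_eq_zero_of_totalDegree_lt {p : MvPolynomial (Fin n) ℝ} {α : Fin n →₀ ℕ}
    (h : p.totalDegree < α.degree) : hermiteCoeff p α = 0 := by
  rw [hermiteCoeff_eq_gaussianMean_normDeriv, normDeriv_eq_zero_of_totalDegree_lt h, map_zero]

theorem gaussianMean_normDeriv_mul_normDeriv (u α β : Fin n →₀ ℕ) :
    gaussianMean (normDeriv u (hermitePoly α) * normDeriv u (hermitePoly β)) =
      if α = β then (multiChoose α u : ℝ) else 0 := by
  simp only [normDeriv_hermitePoly, smul_mul_smul_comm, map_smul, gaussianMean_hermitePoly_mul,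
    smul_eq_mul]
  by_cases hα : u ≤ α
  · by_cases hβ : u ≤ β
    · obtain rfl | hne := eq_or_ne α β
      · simp
      · simp [hne, (tsub_left_inj hα hβ).not.2 hne]
    · rw [if_neg fun h : α = β => hβ (h ▸ hα), multiChoose_eq_zero_of_not_le hβ, Nat.cast_zero,
        Real.sqrt_zero, mul_zero, zero_mul]
  · simp [multiChoose_eq_zero_of_not_le hα]

theorem exists_finsupp_hermiteCoeff (p : MvPolynomial (Fin n) ℝ) :
    ∃ c : (Fin n →₀ ℕ) →₀ ℝ, (∀ α, c α = hermiteCoeff p α) ∧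
      p = c.sum fun α a => a • hermitePoly α := by
  have hp : p ∈ Submodule.span ℝ (Set.range hermitePoly) :=
    span_range_hermitePoly (σ := Fin n) ▸ Submodule.mem_top
  obtain ⟨c, hc⟩ := Finsupp.mem_span_range_iff_exists_finsupp.1 hp
  refine ⟨c, fun α => ?_, hc.symm⟩
  rw [hermiteCoeff_eq_gaussianMean, ← hc, Finsupp.sum, sum_mul, map_sum]
  simp [gaussianMean_hermitePoly_mul]

theorem hasSum_norm2sq_normDeriv (u : Fin n →₀ ℕ) (p : MvPolynomial (Fin n) ℝ) :
    HasSum (fun α : Fin n →₀ ℕ => multiChoose α u * hermiteCoeff p α ^ 2)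
      (norm2sq (normDeriv u p)) := by
  obtain ⟨c, hc, hp⟩ := exists_finsupp_hermiteCoeff p
  have hval : norm2sq (normDeriv u p) =
      ∑ α ∈ c.support, multiChoose α u * hermiteCoeff p α ^ 2 := by
    rw [norm2sq_eq_gaussianMean]
    conv_lhs => rw [hp]
    simp only [Finsupp.sum, map_sum, map_smul, sum_mul_sum, smul_mul_smul_comm,
      gaussianMean_normDeriv_mul_normDeriv, smul_eq_mul, mul_ite, mul_zero, sum_ite_eq]
    refine sum_congr rfl fun α hα => ?_
    rw [if_pos hα, hc]
    ring
  rw [hval]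
  refine hasSum_sum_of_ne_finset_zero fun α hα => ?_
  rw [← hc, Finsupp.notMem_support_iff.1 hα, zero_pow two_ne_zero, mul_zero]

end GaussianMean

section Hypervariance

open Finset

variable {n : ℕ}

theorem finite_support_hermiteCoeff (p : MvPolynomial (Fin n) ℝ) :
    (Function.support fun α : Fin n →₀ ℕ => hermiteCoeff p α).Finite :=
  (Finsupp.finite_of_degree_le p.totalDegree).subset fun _ hα =>
    not_lt.1 fun h => hα (hermiteCoeff_eq_zero_of_totalDegree_lt h)

theorem hasSum_norm2sq (p : MvPolynomial (Fin n) ℝ) :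
    HasSum (fun α : Fin n →₀ ℕ => hermiteCoeff p α ^ 2) (norm2sq p) := by
  simpa only [multiChoose_zero_right, Nat.cast_one, one_mul, normDeriv_zero] using
    hasSum_norm2sq_normDeriv 0 p

/-- The weighted squared norm `∑ α, t ^ |α| * p̂(α) ^ 2`. For `t = ρ ^ 2` this is `‖T_ρ p‖₂²`, where
`T_ρ` is the noise operator. -/
noncomputable def noiseNormSq (t : ℝ) (p : MvPolynomial (Fin n) ℝ) : ℝ :=
  ∑' α : Fin n →₀ ℕ, t ^ α.degree * hermiteCoeff p α ^ 2

theorem summable_pow_mul_hermiteCoeff_sq (t : ℝ) (p : MvPolynomial (Fin n) ℝ) :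
    Summable fun α : Fin n →₀ ℕ => t ^ α.degree * hermiteCoeff p α ^ 2 :=
  summable_of_hasFiniteSupport <| (finite_support_hermiteCoeff p).subset fun α hα h => hα <| by
    simp only [show hermiteCoeff p α = 0 from h, ne_eq, OfNat.ofNat_ne_zero, not_false_eq_true,
      zero_pow, mul_zero]

theorem noiseNormSq_le_noiseNormSq {s t : ℝ} (hs : 0 ≤ s) (hst : s ≤ t)
    (p : MvPolynomial (Fin n) ℝ) : noiseNormSq s p ≤ noiseNormSq t p :=
  (summable_pow_mul_hermiteCoeff_sq s p).tsum_le_tsum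
    (fun _ => by gcongr) (summable_pow_mul_hermiteCoeff_sq t p)

theorem noiseNormSq_nonneg {t : ℝ} (ht : 0 ≤ t) (p : MvPolynomial (Fin n) ℝ) :
    0 ≤ noiseNormSq t p :=
  tsum_nonneg fun _ => by positivity

theorem hyperVarF_eq_tsum (R : ℝ) (f : (Fin n → ℝ) → ℝ) :
    hyperVarF R f = ∑' α : Fin n →₀ ℕ,
      if α = 0 then 0 else (R ^ 2) ^ α.degree * hermiteCoeffF f α ^ 2 := by
  rw [hyperVarF, ← Finsupp.equivFunOnFinite.tsum_eq]
  refine tsum_congr fun α => ?_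
  simp only [Finsupp.equivFunOnFinite_apply, ← Finsupp.degree_eq_sum, Nat.one_le_iff_ne_zero, ne_eq,
    Finsupp.degree_eq_zero_iff, ite_not, pow_mul]
  rfl

theorem hasSum_hyperVar (R : ℝ) (p : MvPolynomial (Fin n) ℝ) :
    HasSum (fun α : Fin n →₀ ℕ => if α = 0 then 0 else (R ^ 2) ^ α.degree * hermiteCoeff p α ^ 2)
      (hyperVar R p) := by
  have h := (hasSum_ite_sub_hasSum (summable_pow_mul_hermiteCoeff_sq (R ^ 2) p).hasSum 0).summable
  rw [show hyperVar R p = _ from hyperVarF_eq_tsum R fun x => eval x p]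
  exact h.hasSum

theorem hyperVar_nonneg (R : ℝ) (p : MvPolynomial (Fin n) ℝ) : 0 ≤ hyperVar R p :=
  (hasSum_hyperVar R p).nonneg fun _ => by positivity

theorem noiseNormSq_le_norm2sq_add_hyperVar (R : ℝ) (p : MvPolynomial (Fin n) ℝ) :
    noiseNormSq (R ^ 2) p ≤ norm2sq p + hyperVar R p := by
  refine hasSum_le (fun α => ?_) (summable_pow_mul_hermiteCoeff_sq (R ^ 2) p).hasSum
    ((hasSum_norm2sq p).add (hasSum_hyperVar R p))
  split_ifs with hα
  · rw [hα, map_zero, pow_zero, one_mul, add_zero]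
  · exact le_add_of_nonneg_left (sq_nonneg _)

theorem hasSum_pow_mul_norm2sq_normDeriv (t : ℝ) (p : MvPolynomial (Fin n) ℝ) :
    HasSum (fun u : Fin n →₀ ℕ => t ^ u.degree * norm2sq (normDeriv u p))
      (noiseNormSq (t + 1) p) := by
  set s := (finite_support_hermiteCoeff p).toFinset
  have hs : ∀ α ∉ s, hermiteCoeff p α = 0 := fun α hα => by simpa [s] using hα
  have hnorm : ∀ u, norm2sq (normDeriv u p) = ∑ α ∈ s, multiChoose α u * hermiteCoeff p α ^ 2 :=
    fun u => (hasSum_norm2sq_normDeriv u p).unique <|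
      hasSum_sum_of_ne_finset_zero fun α hα => by simp [hs α hα]
  have hnoise : noiseNormSq (t + 1) p = ∑ α ∈ s, (t + 1) ^ α.degree * hermiteCoeff p α ^ 2 :=
    tsum_eq_sum fun α hα => by simp [hs α hα]
  have hterm (u : Fin n →₀ ℕ) : t ^ u.degree * norm2sq (normDeriv u p) =
      ∑ α ∈ s, multiChoose α u * t ^ u.degree * hermiteCoeff p α ^ 2 := by
    rw [hnorm, mul_sum]
    exact sum_congr rfl fun α _ => by ring
  simp only [hterm, hnoise]
  exact hasSum_sum fun α _ => (hasSum_multiChoose_mul_pow t α).mul_right _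

end Hypervariance

theorem sq_integral_mul_le {Ω : Type*} [MeasurableSpace Ω] {μ : Measure Ω} {f g : Ω → ℝ}
    (hf : MemLp f 2 μ) (hg : MemLp g 2 μ) :
    (∫ ω, f ω * g ω ∂μ) ^ 2 ≤ (∫ ω, f ω ^ 2 ∂μ) * ∫ ω, g ω ^ 2 ∂μ := by
  have inner_toLp {a b : Ω → ℝ} (ha : MemLp a 2 μ) (hb : MemLp b 2 μ) :
      inner ℝ (ha.toLp a) (hb.toLp b) = ∫ ω, a ω * b ω ∂μ := by
    rw [L2.inner_def]
    refine integral_congr_ae ?_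
    filter_upwards [ha.coeFn_toLp, hb.coeFn_toLp] with ω haω hbω
    rw [haω, hbω, Real.inner_apply]
  simpa only [inner_toLp, ← sq] using real_inner_mul_inner_self_le (hf.toLp f) (hg.toLp g)

section Product

open Finset

variable {n : ℕ}

theorem sq_gaussianMean_mul_le (p q : MvPolynomial (Fin n) ℝ) :
    gaussianMean (p * q) ^ 2 ≤ norm2sq p * norm2sq q := by
  simpa only [gaussianMean_apply, map_mul, norm2sq] using
    sq_integral_mul_le (memLp_two_eval_gaussianN p) (memLp_two_eval_gaussianN q)

theorem sq_hermiteCoeff_mul_le (p q : MvPolynomial (Fin n) ℝ) (γ : Fin n →₀ ℕ) :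
    hermiteCoeff (p * q) γ ^ 2 ≤ 2 ^ γ.degree *
      ∑ uv ∈ antidiagonal γ, norm2sq (normDeriv uv.1 p) * norm2sq (normDeriv uv.2 q) := by
  have hcoeff : hermiteCoeff (p * q) γ = ∑ uv ∈ antidiagonal γ,
      √(multiChoose γ uv.1) * gaussianMean (normDeriv uv.1 p * normDeriv uv.2 q) := by
    simp only [hermiteCoeff_eq_gaussianMean_normDeriv, normDeriv_mul, map_sum, map_smul,
      smul_eq_mul]
  have hchoose : ∑ uv ∈ antidiagonal γ, √(multiChoose γ uv.1 : ℝ) ^ 2 = 2 ^ γ.degree := by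
    simp only [Real.sq_sqrt (Nat.cast_nonneg _)]
    exact_mod_cast sum_antidiagonal_multiChoose γ
  rw [hcoeff, ← hchoose]
  refine (sum_mul_sq_le_sq_mul_sq _ _ _).trans ?_
  gcongr with uv
  exact sq_gaussianMean_mul_le _ _

theorem hasSum_sum_antidiagonal_mul_of_nonneg {A : Type*} [AddCommMonoid A] [HasAntidiagonal A]
    {f g : A → ℝ} {s t : ℝ} (hf : HasSum f s) (hg : HasSum g t) (hf0 : 0 ≤ f) (hg0 : 0 ≤ g) :
    HasSum (fun c => ∑ ab ∈ antidiagonal c, f ab.1 * g ab.2) (s * t) := by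
  have hfg := hf.summable.mul_of_nonneg hg.summable hf0 hg0
  rw [← hf.tsum_eq, ← hg.tsum_eq,
    hf.summable.tsum_mul_tsum_eq_tsum_sum_antidiagonal hg.summable hfg]
  exact (summable_sum_mul_antidiagonal_of_summable_mul hfg).hasSum

theorem hyperVar_mul_le (r : ℝ) (p q : MvPolynomial (Fin n) ℝ) :
    hyperVar r (p * q) ≤ noiseNormSq (2 * r ^ 2 + 1) p * noiseNormSq (2 * r ^ 2 + 1) q -
      norm2sq p * norm2sq q := by
  set a : (Fin n →₀ ℕ) → ℝ := fun u => (2 * r ^ 2) ^ u.degree * norm2sq (normDeriv u p)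
  set b : (Fin n →₀ ℕ) → ℝ := fun u => (2 * r ^ 2) ^ u.degree * norm2sq (normDeriv u q)
  have ha0 : 0 ≤ a := fun u => mul_nonneg (by positivity) (norm2sq_nonneg _)
  have hb0 : 0 ≤ b := fun u => mul_nonneg (by positivity) (norm2sq_nonneg _)
  have hab : HasSum (fun γ => ∑ uv ∈ antidiagonal γ, a uv.1 * b uv.2)
      (noiseNormSq (2 * r ^ 2 + 1) p * noiseNormSq (2 * r ^ 2 + 1) q) :=
    hasSum_sum_antidiagonal_mul_of_nonneg (hasSum_pow_mul_norm2sq_normDeriv _ p)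
      (hasSum_pow_mul_norm2sq_normDeriv _ q) ha0 hb0
  have hab0 : ∑ uv ∈ antidiagonal 0, a uv.1 * b uv.2 = norm2sq p * norm2sq q := by
    simp only [Finsupp.antidiagonal_zero, sum_singleton, a, b, map_zero, pow_zero, one_mul,
      normDeriv_zero]
  have hterm (γ : Fin n →₀ ℕ) : (r ^ 2) ^ γ.degree * hermiteCoeff (p * q) γ ^ 2 ≤
      ∑ uv ∈ antidiagonal γ, a uv.1 * b uv.2 := by
    calc (r ^ 2) ^ γ.degree * hermiteCoeff (p * q) γ ^ 2
        ≤ (r ^ 2) ^ γ.degree * (2 ^ γ.degree * ∑ uv ∈ antidiagonal γ,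
            norm2sq (normDeriv uv.1 p) * norm2sq (normDeriv uv.2 q)) := by
          gcongr
          exact sq_hermiteCoeff_mul_le p q γ
      _ = ∑ uv ∈ antidiagonal γ, a uv.1 * b uv.2 := by
          rw [← mul_assoc, ← mul_pow, mul_comm (r ^ 2), mul_sum]
          refine sum_congr rfl fun uv huv => ?_
          rw [← mem_antidiagonal.1 huv, map_add, pow_add]
          ring
  rw [← hab0]
  refine hasSum_le (fun γ => ?_) (hasSum_hyperVar r (p * q)) (hasSum_ite_sub_hasSum hab 0)
  split_ifs
  exacts [le_rfl, hterm γ]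

theorem hyperVar_sq_le {r R : ℝ} (hrR : 2 * r ^ 2 + 1 ≤ R ^ 2) (p : MvPolynomial (Fin n) ℝ) :
    hyperVar r (p ^ 2) ≤ (2 * norm2sq p + hyperVar R p) * hyperVar R p := by
  have hnoise : noiseNormSq (2 * r ^ 2 + 1) p ≤ norm2sq p + hyperVar R p :=
    (noiseNormSq_le_noiseNormSq (by positivity) hrR p).trans
      (noiseNormSq_le_norm2sq_add_hyperVar R p)
  calc hyperVar r (p ^ 2)
      ≤ noiseNormSq (2 * r ^ 2 + 1) p ^ 2 - norm2sq p ^ 2 := by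
        simpa only [sq] using hyperVar_mul_le r p p
    _ ≤ (norm2sq p + hyperVar R p) ^ 2 - norm2sq p ^ 2 := by
        gcongr
        exact noiseNormSq_nonneg (by positivity) p
    _ = (2 * norm2sq p + hyperVar R p) * hyperVar R p := by ring

end Product

section Averaging

open Finset

variable {Ω : Type*} [MeasurableSpace Ω] {μ : Measure Ω}

theorem sum_sq_integral_le_sq_integral {ι : Type*} {s : Finset ι} {f : ι → Ω → ℝ} {B : Ω → ℝ}
    (hf : ∀ i ∈ s, Integrable (f i) μ) (hB : Integrable B μ) (hB0 : 0 ≤ B)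
    (hfB : ∀ ω, ∑ i ∈ s, f i ω ^ 2 ≤ B ω ^ 2) :
    ∑ i ∈ s, (∫ ω, f i ω ∂μ) ^ 2 ≤ (∫ ω, B ω ∂μ) ^ 2 := by
  set F : Ω → EuclideanSpace ℝ s := fun ω => WithLp.toLp 2 fun i => f i ω
  have hF : ∀ i, Integrable (fun ω => F ω i) μ := fun i => hf i i.2
  have hnormF (ω : Ω) : ‖F ω‖ ≤ B ω := by
    refine le_of_sq_le_sq ?_ (hB0 ω)
    rw [EuclideanSpace.real_norm_sq_eq]
    exact (sum_coe_sort s fun i => f i ω ^ 2).trans_le (hfB ω)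
  calc ∑ i ∈ s, (∫ ω, f i ω ∂μ) ^ 2
      = ‖∫ ω, F ω ∂μ‖ ^ 2 := by
        rw [EuclideanSpace.real_norm_sq_eq, ← sum_coe_sort]
        exact sum_congr rfl fun i _ => by rw [eval_integral_piLp hF]
    _ ≤ (∫ ω, B ω ∂μ) ^ 2 := by
        gcongr
        exact norm_integral_le_of_norm_le hB (.of_forall hnormF)

theorem memLp_two_sqrt {f : Ω → ℝ} (hf : Integrable f μ) (hf0 : ∀ ω, 0 ≤ f ω) :
    MemLp (fun ω => √(f ω)) 2 μ := by
  rw [memLp_two_iff_integrable_sq (Real.continuous_sqrt.comp_aestronglyMeasurable hf.1)]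
  simpa only [Real.sq_sqrt (hf0 _)] using hf

section LinearMap

variable {σ : Type*} [Finite σ] {d : ℕ}

theorem linearMap_eq_sum_coeff_mul (L : MvPolynomial σ ℝ →ₗ[ℝ] ℝ) {p : MvPolynomial σ ℝ}
    (hp : p.totalDegree ≤ d) :
    L p = ∑ m ∈ (Finsupp.finite_of_degree_le d).toFinset, coeff m p * L (monomial m 1) := by
  have hsub : p.support ⊆ (Finsupp.finite_of_degree_le d).toFinset := fun m hm =>
    (Set.Finite.mem_toFinset _).2 ((le_totalDegree hm).trans hp)
  conv_lhs => rw [p.as_sum, sum_subset hsub fun m _ hm => by rw [notMem_support_iff.1 hm, map_zero]]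
  refine (map_sum L _ _).trans (sum_congr rfl fun m _ => ?_)
  rw [← smul_eq_mul, ← map_smul, smul_monomial, smul_eq_mul, mul_one]

variable {p : Ω → MvPolynomial σ ℝ} (hdeg : ∀ ω, (p ω).totalDegree ≤ d)

include hdeg

theorem memLp_linearMap_apply {e : ENNReal} (hcoeff : ∀ m, MemLp (fun ω => coeff m (p ω)) e μ)
    (L : MvPolynomial σ ℝ →ₗ[ℝ] ℝ) : MemLp (fun ω => L (p ω)) e μ := by
  simp only [fun ω => linearMap_eq_sum_coeff_mul L (hdeg ω)]
  exact memLp_finsetSum _ fun m _ => (hcoeff m).mul_const _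

theorem exists_forall_linearMap_eq_integral
    (hcoeff : ∀ m, Integrable (fun ω => coeff m (p ω)) μ) :
    ∃ G : MvPolynomial σ ℝ, ∀ L : MvPolynomial σ ℝ →ₗ[ℝ] ℝ, L G = ∫ ω, L (p ω) ∂μ := by
  refine ⟨∑ m ∈ (Finsupp.finite_of_degree_le d).toFinset, monomial m (∫ ω, coeff m (p ω) ∂μ),
    fun L => ?_⟩
  simp only [fun ω => linearMap_eq_sum_coeff_mul L (hdeg ω)]
  rw [integral_finsetSum _ fun m _ => (hcoeff m).mul_const _, map_sum]
  refine sum_congr rfl fun m _ => ?_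
  rw [integral_mul_const, ← smul_eq_mul, ← map_smul, smul_monomial, smul_eq_mul, mul_one]

end LinearMap

variable {n d : ℕ}

theorem totalDegree_sq_le {σ : Type*} {p : MvPolynomial σ ℝ} (hp : p.totalDegree ≤ d) :
    (p ^ 2).totalDegree ≤ 2 * d :=
  (totalDegree_pow p 2).trans (Nat.mul_le_mul_left 2 hp)

theorem integrable_coeff_sq {σ : Type*} {q : Ω → MvPolynomial σ ℝ}
    (hcoeff : ∀ m, MemLp (fun ω => coeff m (q ω)) 2 μ) (m : σ →₀ ℕ) :
    Integrable (fun ω => coeff m (q ω ^ 2)) μ := by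
  classical
  simp only [sq, coeff_mul]
  exact integrable_finsetSum _ fun ab _ => (hcoeff ab.1).integrable_mul (hcoeff ab.2)

/-- The weighted Hermite coefficient `p ↦ r ^ |α| * p̂(α)`, replaced by zero at `α = 0`, as a linear
functional; `HyperVar_r` is the sum of the squares of these functionals. -/
noncomputable def hyperVarCoeff (r : ℝ) (α : Fin n →₀ ℕ) : MvPolynomial (Fin n) ℝ →ₗ[ℝ] ℝ :=
  if α = 0 then 0 else r ^ α.degree • gaussianMean ∘ₗ normDeriv α

theorem hyperVarCoeff_apply (r : ℝ) (α : Fin n →₀ ℕ) (p : MvPolynomial (Fin n) ℝ) :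
    hyperVarCoeff r α p = if α = 0 then 0 else r ^ α.degree * hermiteCoeff p α := by
  rw [hyperVarCoeff, hermiteCoeff_eq_gaussianMean_normDeriv]
  split_ifs <;> rfl

theorem hasSum_sq_hyperVarCoeff (r : ℝ) (p : MvPolynomial (Fin n) ℝ) :
    HasSum (fun α => hyperVarCoeff r α p ^ 2) (hyperVar r p) := by
  simpa only [hyperVarCoeff_apply, ite_pow, mul_pow, zero_pow two_ne_zero, pow_right_comm] using
    hasSum_hyperVar r p

theorem hyperVarF_integral_le_sq_integral {p : Ω → MvPolynomial (Fin n) ℝ}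
    (hdeg : ∀ ω, (p ω).totalDegree ≤ d) (hcoeff : ∀ m, Integrable (fun ω => coeff m (p ω)) μ)
    {r : ℝ} {B : Ω → ℝ} (hB : Integrable B μ) (hB0 : 0 ≤ B)
    (hpB : ∀ ω, hyperVar r (p ω) ≤ B ω ^ 2) :
    hyperVarF r (fun x => ∫ ω, eval x (p ω) ∂μ) ≤ (∫ ω, B ω ∂μ) ^ 2 := by
  obtain ⟨G, hG⟩ := exists_forall_linearMap_eq_integral hdeg hcoeff
  have hmean : (fun x => ∫ ω, eval x (p ω) ∂μ) = fun x => eval x G :=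
    funext fun x => (hG (aeval x).toLinearMap).symm
  have hint (α : Fin n →₀ ℕ) : Integrable (fun ω => hyperVarCoeff r α (p ω)) μ :=
    memLp_one_iff_integrable.1 <|
      memLp_linearMap_apply hdeg (fun m => memLp_one_iff_integrable.2 (hcoeff m)) _
  rw [hmean]
  refine hasSum_le_of_sum_le (hasSum_sq_hyperVarCoeff r G) fun s => ?_
  simp only [hG]
  exact sum_sq_integral_le_sq_integral (fun α _ => hint α) hB hB0 fun ω =>
    (sum_le_hasSum s (fun _ _ => sq_nonneg _) (hasSum_sq_hyperVarCoeff r (p ω))).trans (hpB ω)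

section Integrability

variable {q : Ω → MvPolynomial (Fin n) ℝ} (hdeg : ∀ ω, (q ω).totalDegree ≤ d)
  (hcoeff : ∀ m, MemLp (fun ω => coeff m (q ω)) 2 μ)

include hdeg hcoeff

theorem integrable_norm2sq : Integrable (fun ω => norm2sq (q ω)) μ := by
  simp only [norm2sq_eq_gaussianMean, ← sq]
  rw [← memLp_one_iff_integrable]
  exact memLp_linearMap_apply (fun ω => totalDegree_sq_le (hdeg ω))
    (fun m => memLp_one_iff_integrable.2 (integrable_coeff_sq hcoeff m)) _

theorem integrable_hyperVar (R : ℝ) : Integrable (fun ω => hyperVar R (q ω)) μ := by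
  set s := (Finsupp.finite_of_degree_le (σ := Fin n) d).toFinset
  have hsum (ω : Ω) : hyperVar R (q ω) = ∑ α ∈ s, hyperVarCoeff R α (q ω) ^ 2 := by
    refine (hasSum_sq_hyperVarCoeff R (q ω)).unique (hasSum_sum_of_ne_finset_zero fun α hα => ?_)
    have hαd : d < α.degree := by simpa [s] using hα
    rw [hyperVarCoeff_apply, hermiteCoeff_eq_zero_of_totalDegree_lt ((hdeg ω).trans_lt hαd),
      mul_zero, ite_self, zero_pow two_ne_zero]
  simp only [hsum]
  exact integrable_finsetSum _ fun α _ => (memLp_linearMap_apply hdeg hcoeff _).integrable_sq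

end Integrability

theorem hypervar_of_averaged_square_general {q : Ω → MvPolynomial (Fin n) ℝ}
    (hdeg : ∀ ω, (q ω).totalDegree ≤ d) (hcoeff : ∀ m, MemLp (fun ω => coeff m (q ω)) 2 μ)
    {r R : ℝ} (hrR : 2 * r ^ 2 + 1 ≤ R ^ 2) :
    hyperVarF r (fun x => ∫ ω, eval x (q ω) ^ 2 ∂μ) ≤
      (2 * ∫ ω, norm2sq (q ω) ∂μ + ∫ ω, hyperVar R (q ω) ∂μ) * ∫ ω, hyperVar R (q ω) ∂μ := by
  have hN := (integrable_norm2sq hdeg hcoeff).const_mul 2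
  have hV := integrable_hyperVar hdeg hcoeff R
  set X : Ω → ℝ := fun ω => 2 * norm2sq (q ω) + hyperVar R (q ω)
  have hX : Integrable X μ := hN.add hV
  have hV0 (ω : Ω) : 0 ≤ hyperVar R (q ω) := hyperVar_nonneg R (q ω)
  have hX0 (ω : Ω) : 0 ≤ X ω := add_nonneg (mul_nonneg zero_le_two (norm2sq_nonneg _)) (hV0 ω)
  have hsqrtX := memLp_two_sqrt hX hX0
  have hsqrtV := memLp_two_sqrt hV hV0
  calc hyperVarF r (fun x => ∫ ω, eval x (q ω) ^ 2 ∂μ)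
      ≤ (∫ ω, √(X ω) * √(hyperVar R (q ω)) ∂μ) ^ 2 := by
        simp only [← map_pow]
        refine hyperVarF_integral_le_sq_integral (fun ω => totalDegree_sq_le (hdeg ω))
          (integrable_coeff_sq hcoeff) (hsqrtX.integrable_mul hsqrtV)
          (fun ω => by positivity) fun ω => ?_
        rw [mul_pow, Real.sq_sqrt (hX0 ω), Real.sq_sqrt (hV0 ω)]
        exact hyperVar_sq_le hrR (q ω)
    _ ≤ (∫ ω, X ω ∂μ) * ∫ ω, hyperVar R (q ω) ∂μ := by
        simpa only [Real.sq_sqrt (hX0 _), Real.sq_sqrt (hV0 _)] using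
          sq_integral_mul_le hsqrtX hsqrtV
    _ = _ := by rw [integral_add hN hV, integral_const_mul]

end Averaging

theorem memLp_coeff_of_niceFamily {n I d : ℕ} {q : (Fin I → ℝ) → MvPolynomial (Fin n) ℝ}
    (hnice : NiceFamily n I d q) (m : Fin n →₀ ℕ) :
    MemLp (fun υ => coeff m (q υ)) 2 (gaussianN I) := by
  obtain ⟨P, -, hP⟩ := hnice.2 m
  simpa only [hP] using memLp_two_eval_gaussianN P

theorem two_mul_sq_rpow_div_add_one_le {R : ℝ} (hR : √3 ≤ R) :
    2 * (R ^ ((1 : ℝ) / 4) / 13) ^ 2 + 1 ≤ R ^ 2 := by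
  have hR3 : 3 ≤ R ^ 2 := (Real.sqrt_le_iff.1 hR).2
  have hR1 : 1 ≤ R := (Real.one_le_sqrt.2 (by norm_num)).trans hR
  have hroot : R ^ ((1 : ℝ) / 4) ≤ R := Real.rpow_le_self_of_one_le hR1 (by norm_num)
  have hroot0 : 0 ≤ R ^ ((1 : ℝ) / 4) := by positivity
  nlinarith

/-- Hypervariance of the averaged square of a nice distribution: for a nice
distribution `(q_υ)` of polynomials, `R̄ ≥ √3`, `R₀ = R̄^{1/4}/13`, and
`g(x) = E_υ[q_υ(x)²]`, we have
`HyperVar_{R₀}[g] ≤ 8·(E_υ[‖q_υ‖₂²] + E_υ[HyperVar_{R̄}[q_υ]])·E_υ[HyperVar_{R̄}[q_υ]]`. -/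
theorem hypervar_of_averaged_square (n I d : ℕ)
    (q : (Fin I → ℝ) → MvPolynomial (Fin n) ℝ) (hnice : NiceFamily n I d q)
    (Rbar : ℝ) (hR : Real.sqrt 3 ≤ Rbar) :
    hyperVarF (Rbar ^ ((1 : ℝ) / 4) / 13)
        (fun x => ∫ υ, (eval x (q υ)) ^ 2 ∂(gaussianN I)) ≤
      8 * ((∫ υ, norm2sq (q υ) ∂(gaussianN I)) + ∫ υ, hyperVar Rbar (q υ) ∂(gaussianN I)) *
        ∫ υ, hyperVar Rbar (q υ) ∂(gaussianN I) := by
  have hN : 0 ≤ ∫ υ, norm2sq (q υ) ∂(gaussianN I) := integral_nonneg fun υ => norm2sq_nonneg (q υ)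
  have hV : 0 ≤ ∫ υ, hyperVar Rbar (q υ) ∂(gaussianN I) :=
    integral_nonneg fun υ => hyperVar_nonneg Rbar (q υ)
  refine (hypervar_of_averaged_square_general hnice.1 (memLp_coeff_of_niceFamily hnice)
    (two_mul_sq_rpow_div_add_one_le hR)).trans (mul_le_mul_of_nonneg_right ?_ hV)
  linarith
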